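/- Let r ≥ 3 and suppose n is a positive integer and α a real number with (ln n)^{-1/(r-1)} ≤ α ≤ r^{-3}. Let U_1,…,U_r be sets each of size n, and let M ⊆ U_1 × ⋯ × U_r satisfy |M| ≥ α·n^r. If positive integers s_1,…,s_{r−1} satisfy s_1·s_2···s_{r−1} ≤ α^{r−1}·ln n, then there exist sets V_1,…,V_r with V_i ⊆ U_i for all i, |V_i| = s_i for 1 ≤ i ≤ r−1, |V_r| ≥ (α/2)·(α/2^r)^{(r−1)·s_1·s_2···s_{r−1}}·n, and V_1 × ⋯ × V_r ⊆ M. -/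

import Mathlib

/-!
The box is built one coordinate at a time. Fixing the first coordinate turns `M` into a bipartite
relation between `U 0` and the tuples in the remaining sets. If this relation has density `β`, then
a Kővári–Sós–Turán count (`exists_common_neighbors`) yields `s 0` elements of `U 0` whose common
neighbourhood has density at least `(β / 2) ^ s 0` among the remaining tuples, provided
`2 * s 0 ≤ β * n`. Iterating (`exists_box`) leaves a last set of density at least
`(α / 2 ^ (r - 1)) ^ S` with `S = s 0 * ⋯ * s (r - 2)`, because each factor `1 / 2` lost on the way
is raised to a subproduct of the `s i`, hence to a power at most `S`. This exceeds the bound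
required. The size condition at every step follows from `2 * S ≤ (α / 2 ^ (r - 1)) ^ S * n`, which
holds because `S ≤ α ^ (r - 1) * log n` is small against `log n` (`size_condition`).
-/

open Finset in
/-- Kővári–Sós–Turán: a bipartite relation of density `b` has `s` vertices on one side whose common
neighbourhood on the other side has density at least `(b / 2) ^ s`. The pairs `(V, y)` with `V` an
`s`-subset of the neighbourhood of `y` are counted in two ways, the lower bound being Jensen's
inequality for `x ↦ x ^ s` applied to `d y - s`, where `d y` is the degree of `y`. -/
theorem exists_common_neighbors {A B : Type*} [DecidableEq A] (X : Finset A) (Y : Finset B)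
    (P : A → B → Prop) [∀ a y, Decidable (P a y)] (b : ℝ) (hb1 : b ≤ 1) (s : ℕ)
    (hs : 1 ≤ s) (hsb : 2 * (s : ℝ) ≤ b * #X)
    (hE : b * #X * #Y ≤ ∑ y ∈ Y, (#{a ∈ X | P a y} : ℝ)) :
    ∃ V ⊆ X, #V = s ∧ (b / 2) ^ s * #Y ≤ (#{y ∈ Y | ∀ a ∈ V, P a y} : ℝ) := by
  have hs' : (1 : ℝ) ≤ s := by exact_mod_cast hs
  have hX0 : (0 : ℝ) ≤ #X := by positivity
  have hsX : s ≤ #X := by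
    have : (s : ℝ) ≤ #X := by nlinarith
    exact_mod_cast this
  have hne : (powersetCard s X).Nonempty := powersetCard_nonempty.2 hsX
  by_contra! hcon
  have hlt : ∑ V ∈ powersetCard s X, (#{y ∈ Y | ∀ a ∈ V, P a y} : ℝ)
      < ∑ V ∈ powersetCard s X, (b / 2) ^ s * (#Y : ℝ) := by
    apply sum_lt_sum_of_nonempty hne
    intro V hV
    rw [mem_powersetCard] at hV
    exact hcon V hV.1 hV.2
  have hdc : ∑ V ∈ powersetCard s X, #{y ∈ Y | ∀ a ∈ V, P a y}
      = ∑ y ∈ Y, (#{a ∈ X | P a y}).choose s := by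
    simp_rw [card_filter]
    rw [sum_comm]
    refine sum_congr rfl fun y _ => ?_
    rw [← card_filter, ← card_filter, ← card_powersetCard]
    congr 1
    ext V
    simp only [mem_filter, mem_powersetCard, subset_iff]
    constructor
    · rintro ⟨⟨h1, h2⟩, h3⟩
      exact ⟨fun a ha => ⟨h1 ha, h3 a ha⟩, h2⟩
    · rintro ⟨h1, h2⟩
      exact ⟨⟨fun a ha => (h1 ha).1, h2⟩, fun a ha => (h1 ha).2⟩
  have hdc' : ∑ V ∈ powersetCard s X, (#{y ∈ Y | ∀ a ∈ V, P a y} : ℝ)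
      = ∑ y ∈ Y, ((#{a ∈ X | P a y}).choose s : ℝ) := by exact_mod_cast hdc
  rw [hdc', sum_const, card_powersetCard, nsmul_eq_mul] at hlt
  have hYpos : 0 < (#Y : ℝ) := by
    rcases Y.eq_empty_or_nonempty with h | h
    · simp [h] at hlt
    · exact_mod_cast h.card_pos
  have hfac : (0 : ℝ) < s.factorial := by exact_mod_cast s.factorial_pos
  have hXs : ((s.factorial : ℝ) * (#X).choose s) ≤ (#X : ℝ) ^ s := by
    rw [← Nat.cast_mul, ← Nat.descFactorial_eq_factorial_mul_choose]
    exact_mod_cast Nat.descFactorial_le_pow _ _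
  have hlow : ∀ d : ℕ, (max ((d : ℝ) - s) 0) ^ s ≤ (s.factorial : ℝ) * d.choose s := by
    intro d
    rw [← Nat.cast_mul, ← Nat.descFactorial_eq_factorial_mul_choose]
    have h1 : (((d + 1 - s) ^ s : ℕ) : ℝ) ≤ d.descFactorial s := by
      exact_mod_cast Nat.pow_sub_le_descFactorial d s
    refine le_trans ?_ h1
    push_cast
    refine pow_le_pow_left₀ (le_max_right _ _) (max_le ?_ (by positivity)) _
    rw [sub_le_iff_le_add]
    have : d ≤ (d + 1 - s) + s := by omega
    exact_mod_cast this
  have hjensen : (∑ y ∈ Y, max ((#{a ∈ X | P a y} : ℝ) - s) 0) ^ s / (#Y : ℝ) ^ (s - 1)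
      ≤ ∑ y ∈ Y, (max ((#{a ∈ X | P a y} : ℝ) - s) 0) ^ s := by
    obtain ⟨t, rfl⟩ : ∃ t, s = t + 1 := ⟨s - 1, by omega⟩
    exact pow_sum_div_card_le_sum_pow (fun y _ => le_max_right _ _) t
  have hsum : (b / 2 * #X) * #Y ≤ ∑ y ∈ Y, max ((#{a ∈ X | P a y} : ℝ) - s) 0 := by
    calc (b / 2 * #X) * #Y ≤ (∑ y ∈ Y, (#{a ∈ X | P a y} : ℝ)) - #Y * s := by nlinarith
      _ = ∑ y ∈ Y, ((#{a ∈ X | P a y} : ℝ) - s) := by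
        rw [sum_sub_distrib, sum_const, nsmul_eq_mul]
      _ ≤ _ := sum_le_sum fun y _ => le_max_left _ _
  have hbX : 0 ≤ b / 2 * #X := by linarith
  have hmain : (b / 2 * #X) ^ s * #Y ≤
      (∑ y ∈ Y, max ((#{a ∈ X | P a y} : ℝ) - s) 0) ^ s / (#Y : ℝ) ^ (s - 1) := by
    rw [le_div_iff₀ (by positivity), mul_assoc, mul_pow_sub_one (by omega), ← mul_pow]
    exact pow_le_pow_left₀ (by positivity) hsum s
  have hupper : ∑ y ∈ Y, (max ((#{a ∈ X | P a y} : ℝ) - s) 0) ^ s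
      ≤ s.factorial * ∑ y ∈ Y, ((#{a ∈ X | P a y}).choose s : ℝ) := by
    rw [mul_sum]
    exact sum_le_sum fun y _ => hlow _
  have hb0 : 0 ≤ b / 2 := by
    by_contra! h
    nlinarith
  have h2 : (s.factorial : ℝ) * ∑ y ∈ Y, ((#{a ∈ X | P a y}).choose s : ℝ)
      < (b / 2 * #X) ^ s * #Y := by
    calc _ < (s.factorial : ℝ) * ((#X).choose s * ((b / 2) ^ s * #Y)) :=
          mul_lt_mul_of_pos_left hlt hfac
      _ = (s.factorial * (#X).choose s) * ((b / 2) ^ s * #Y) := by ring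
      _ ≤ (#X : ℝ) ^ s * ((b / 2) ^ s * #Y) := by gcongr
      _ = _ := by rw [mul_pow]; ring
  linarith

open Finset in
/-- A set of density `b` in a product of `k + 1` sets of size `n` contains a box with prescribed
side lengths in the first `k` coordinates and a last side of density at least
`(b / 2 ^ k) ^ S`, where `S` is the product of the prescribed lengths. The hypothesis
`2 * S ≤ (b / 2 ^ k) ^ S * n` is inherited by the remaining coordinates after each step. -/
theorem exists_box {γ : Type*} [DecidableEq γ] (n k : ℕ) : ∀ (b : ℝ), 0 < b → b ≤ 1 →
    ∀ (U : Fin (k + 1) → Finset γ), (∀ i, #(U i) = n) →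
    ∀ M : Finset (Fin (k + 1) → γ), (∀ f ∈ M, ∀ i, f i ∈ U i) →
    b * (n : ℝ) ^ (k + 1) ≤ #M →
    ∀ s : ℕ → ℕ, (∀ i < k, 1 ≤ s i) →
    2 * ((∏ i ∈ range k, s i : ℕ) : ℝ) ≤ (b / 2 ^ k) ^ (∏ i ∈ range k, s i) * n →
    ∃ V : Fin (k + 1) → Finset γ, (∀ i, V i ⊆ U i) ∧
      (∀ i : Fin (k + 1), (i : ℕ) < k → #(V i) = s i) ∧
      (b / 2 ^ k) ^ (∏ i ∈ range k, s i) * (n : ℝ) ≤ #(V (Fin.last k)) ∧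
      ∀ f : Fin (k + 1) → γ, (∀ i, f i ∈ V i) → f ∈ M := by
  induction k with
  | zero =>
    intro b hb0 hb1 U hU M hMU hM s hs hS
    refine ⟨fun i => M.image fun f => f i, ?_, ?_, ?_, ?_⟩
    · intro i a ha
      obtain ⟨f, hf, rfl⟩ := mem_image.1 ha
      exact hMU f hf i
    · intro i hi
      omega
    · rw [card_image_of_injective]
      · simpa using hM
      · intro f g hfg
        ext i
        rw [show i = Fin.last 0 from Fin.fin_one_eq_zero i]
        exact hfg
    · intro f hf
      obtain ⟨g, hg, hgf⟩ := mem_image.1 (hf 0)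
      have : g = f := by
        ext i
        rw [Fin.fin_one_eq_zero i]
        exact hgf
      exact this ▸ hg
  | succ k ih =>
    intro b hb0 hb1 U hU M hMU hM s hs hS
    have hprod : ∏ i ∈ range (k + 1), s i = s 0 * ∏ i ∈ range k, s (i + 1) := by
      rw [prod_range_succ', mul_comm]
    rw [hprod] at hS ⊢
    have hs0 : 1 ≤ s 0 := hs 0 (by omega)
    have hS'1 : 1 ≤ ∏ i ∈ range k, s (i + 1) :=
      Nat.one_le_iff_ne_zero.2 (prod_ne_zero_iff.2 fun i hi =>
        Nat.one_le_iff_ne_zero.1 (hs _ (by have := mem_range.1 hi; omega)))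
    set S' := ∏ i ∈ range k, s (i + 1) with hS'
    have hS1 : 1 ≤ s 0 * S' := Nat.mul_pos hs0 hS'1
    have h2k : (1 : ℝ) ≤ 2 ^ k := one_le_pow₀ (by norm_num)
    have h2k1 : (1 : ℝ) ≤ 2 ^ (k + 1) := one_le_pow₀ (by norm_num)
    have hbk : b / 2 ^ (k + 1) ≤ b := div_le_self hb0.le h2k1
    have hn0 : (0 : ℝ) ≤ n := by positivity
    have hQb : (b / 2 ^ (k + 1)) ^ (s 0 * S') ≤ b :=
      (pow_le_of_le_one (by positivity) (hbk.trans hb1) (by omega)).trans hbk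
    have hs0S : (s 0 : ℝ) ≤ ((s 0 * S' : ℕ) : ℝ) := by
      exact_mod_cast Nat.le_mul_of_pos_right _ hS'1
    have hS'S : (S' : ℝ) ≤ ((s 0 * S' : ℕ) : ℝ) := by
      exact_mod_cast Nat.le_mul_of_pos_left _ hs0
    have hQQ : (b / 2 ^ (k + 1)) ^ (s 0 * S') ≤ ((b / 2) ^ s 0 / 2 ^ k) ^ S' := by
      rw [pow_mul]
      refine pow_le_pow_left₀ (by positivity) ?_ _
      rw [pow_succ', ← div_div, div_pow]
      gcongr
      exact le_self_pow₀ h2k (by omega)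
    let Y : Finset (Fin (k + 1) → γ) := Fintype.piFinset fun i => U i.succ
    have hY : #Y = n ^ (k + 1) := by
      simp [Y, Fintype.card_piFinset, hU]
    have hMcard : #M = ∑ y ∈ Y, #{a ∈ U 0 | (Fin.cons a y : Fin (k + 2) → γ) ∈ M} := by
      rw [card_eq_sum_card_fiberwise (f := Fin.tail) (t := Y)]
      · refine sum_congr rfl fun y _ => ?_
        refine card_bij' (fun f _ => f 0) (fun a _ => Fin.cons a y) ?_ ?_ ?_ ?_
        · intro f hf
          obtain ⟨hfM, rfl⟩ := mem_filter.1 hf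
          exact mem_filter.2 ⟨hMU f hfM 0, by rwa [Fin.cons_self_tail]⟩
        · intro a ha
          exact mem_filter.2 ⟨(mem_filter.1 ha).2, Fin.tail_cons _ _⟩
        · intro f hf
          obtain ⟨hf, rfl⟩ := mem_filter.1 hf
          exact Fin.cons_self_tail f
        · intro a ha
          rfl
      · intro f hf
        exact Fintype.mem_piFinset.2 fun i => hMU f hf i.succ
    obtain ⟨V0, hV0, hV0c, hZ⟩ := exists_common_neighbors (U 0) Y
      (fun a y => (Fin.cons a y : Fin (k + 2) → γ) ∈ M) b hb1 (s 0) hs0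
      (by rw [hU]; nlinarith)
      (by
        rw [hU, hY]
        push_cast
        calc b * n * (n : ℝ) ^ (k + 1) = b * (n : ℝ) ^ (k + 1 + 1) := by ring
          _ ≤ #M := hM
          _ = _ := by rw [hMcard]; push_cast; rfl)
    rw [hY] at hZ
    push_cast at hZ
    obtain ⟨V, hVU, hVs, hVl, hVM⟩ := ih ((b / 2) ^ s 0) (by positivity)
      (pow_le_one₀ (by positivity) (by linarith)) (fun i => U i.succ) (fun i => hU _)
      {y ∈ Y | ∀ a ∈ V0, (Fin.cons a y : Fin (k + 2) → γ) ∈ M}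
      (fun f hf i => Fintype.mem_piFinset.1 (mem_filter.1 hf).1 i) hZ (fun i => s (i + 1))
      (fun i hi => hs _ (by omega))
      (by
        rw [← hS']
        nlinarith [mul_le_mul_of_nonneg_right hQQ hn0])
    refine ⟨Fin.cons V0 V, ?_, ?_, ?_, ?_⟩
    · intro i
      refine Fin.cases ?_ (fun j => ?_) i
      · exact hV0
      · exact hVU j
    · intro i
      refine Fin.cases ?_ (fun j => ?_) i
      · exact fun _ => hV0c
      · intro hj
        exact hVs j (by simpa using hj)
    · rw [← Fin.succ_last, Fin.cons_succ]
      exact (mul_le_mul_of_nonneg_right hQQ hn0).trans hVl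
    · intro f hf
      have h1 := hVM (Fin.tail f) fun i => by
        have := hf i.succ
        rwa [Fin.cons_succ] at this
      have h2 := (mem_filter.1 h1).2 (f 0) (by simpa using hf 0)
      rwa [Fin.cons_self_tail] at h2

/-- The logarithm of `2 ^ k / a` is at most `2 / a`, so `(a / 2 ^ k) ^ S` is at least `n ^ (-2a)`;
hence `(a / 2 ^ k) ^ S * n` is at least a fixed positive power of `n`, whereas `S` is at most
`a * log n`. -/
theorem size_condition (k n S : ℕ) (hk : 2 ≤ k) (hn : 0 < n) (a : ℝ) (ha0 : 0 < a)
    (ha : a ≤ (((k : ℝ) + 1) ^ 3)⁻¹) (hS : (S : ℝ) ≤ a ^ k * Real.log n) :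
    2 * (S : ℝ) ≤ (a / 2 ^ k) ^ S * n := by
  have hn' : (0 : ℝ) < n := by exact_mod_cast hn
  have hk' : (2 : ℝ) ≤ k := by exact_mod_cast hk
  have hL : 0 ≤ Real.log n := Real.log_natCast_nonneg n
  set L := Real.log n with hLdef
  have ha27 : a ≤ 1 / 27 := by
    refine ha.trans ?_
    rw [one_div]
    refine inv_anti₀ (by norm_num) ?_
    calc (27 : ℝ) = (2 + 1) ^ 3 := by norm_num
      _ ≤ _ := by gcongr
  have hka : (k : ℝ) ≤ 1 / a := by
    have h1 : ((k : ℝ) + 1) ^ 3 ≤ 1 / a := by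
      rw [one_div]
      exact (le_inv_comm₀ ha0 (by positivity)).1 ha
    nlinarith [sq_nonneg (k : ℝ)]
  have hak : a ^ k ≤ a ^ 2 := pow_le_pow_of_le_one ha0.le (by linarith) hk
  have hSL : (S : ℝ) ≤ a ^ 2 * L := hS.trans (by gcongr)
  have hlog : -(2 / a) ≤ Real.log (a / 2 ^ k) := by
    rw [Real.log_div ha0.ne' (by positivity), Real.log_pow]
    have h1 : -Real.log a ≤ 1 / a - 1 := by
      rw [← Real.log_inv, one_div]
      exact Real.log_le_sub_one_of_pos (by positivity)
    have h2 : (k : ℝ) * Real.log 2 ≤ k * 1 := by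
      gcongr
      linarith [Real.log_two_lt_d9]
    have h3 : 2 / a = 1 / a + 1 / a := by ring
    linarith
  have hpow : (a / 2 ^ k) ^ S * n = Real.exp (S * Real.log (a / 2 ^ k) + L) := by
    rw [Real.exp_add, hLdef, Real.exp_log hn', mul_comm (S : ℝ), Real.exp_mul,
      Real.exp_log (by positivity), Real.rpow_natCast]
  have hexp : -(2 * a * L) ≤ S * Real.log (a / 2 ^ k) := by
    have h1 : (S : ℝ) * (2 / a) ≤ a ^ 2 * L * (2 / a) := by gcongr
    have h2 : a ^ 2 * L * (2 / a) = 2 * a * L := by field_simp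
    have h3 : (S : ℝ) * -(2 / a) ≤ S * Real.log (a / 2 ^ k) := by gcongr
    linarith
  rw [hpow]
  have h4 := Real.add_one_le_exp (S * Real.log (a / 2 ^ k) + L)
  have h5 : a * L ≤ 1 / 27 * L := by gcongr
  have h6 : a ^ 2 * L ≤ 1 / 27 * L := by
    gcongr
    nlinarith
  linarith

/-- Variant of Theorem 3 of the paper with the explicit lower bound
`|V (r-1)| ≥ (α/2) (α/2^r)^{(r-1) s 0 ⋯ s (r-2)} n` on the last part of the box. -/
theorem stmt_4 {γ : Type*} [DecidableEq γ] (r n : ℕ) (hr : 3 ≤ r) (hn : 0 < n) (α : ℝ)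
    (hα₁ : Real.log n ^ (-1 / ((r : ℝ) - 1)) ≤ α) (hα₂ : α ≤ ((r : ℝ) ^ 3)⁻¹)
    (U : Fin r → Finset γ) (hU : ∀ i, (U i).card = n)
    (M : Finset (Fin r → γ)) (hMU : ∀ f ∈ M, ∀ i, f i ∈ U i)
    (hM : α * (n : ℝ) ^ r ≤ (M.card : ℝ))
    (s : ℕ → ℕ) (hs : ∀ i < r - 1, 1 ≤ s i)
    (hsprod : ((∏ i ∈ Finset.range (r - 1), s i : ℕ) : ℝ) ≤ α ^ (r - 1) * Real.log n) :
    ∃ V : Fin r → Finset γ,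
      (∀ i, V i ⊆ U i) ∧
      (∀ i : Fin r, (i : ℕ) < r - 1 → (V i).card = s i) ∧
      α / 2 * (α / 2 ^ r) ^ ((r - 1) * ∏ i ∈ Finset.range (r - 1), s i) * (n : ℝ) ≤
        ((V ⟨r - 1, by omega⟩).card : ℝ) ∧
      ∀ f : Fin r → γ, (∀ i, f i ∈ V i) → f ∈ M := by
  obtain ⟨k, rfl⟩ : ∃ k, r = k + 1 := ⟨r - 1, by omega⟩
  simp only [Nat.add_sub_cancel] at hs hsprod ⊢
  push_cast at hα₁ hα₂
  set S := ∏ i ∈ Finset.range k, s i with hS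
  have hS1 : 1 ≤ S :=
    Nat.one_le_iff_ne_zero.2 (Finset.prod_ne_zero_iff.2 fun i hi =>
      Nat.one_le_iff_ne_zero.1 (hs _ (Finset.mem_range.1 hi)))
  have hS1' : (1 : ℝ) ≤ S := by exact_mod_cast hS1
  -- As `1 ≤ S ≤ α ^ k * log n`, the logarithm is nonzero, which rules out the junk value of
  -- `0 ^ (-1 / (r - 1))`.
  have hL : 0 < Real.log n := by
    refine lt_of_le_of_ne (Real.log_natCast_nonneg n) fun h => ?_
    rw [← h, mul_zero] at hsprod
    linarith
  have hα0 : 0 < α := (Real.rpow_pos_of_pos hL _).trans_le hα₁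
  have hα1 : α ≤ 1 := hα₂.trans
    (inv_le_one_of_one_le₀ (one_le_pow₀ (by linarith [k.cast_nonneg (α := ℝ)])))
  obtain ⟨V, hVU, hVs, hVl, hVM⟩ := exists_box n k α hα0 hα1 U hU M hMU hM s hs
    (size_condition k n S (by omega) hn α hα0 hα₂ hsprod)
  refine ⟨V, hVU, hVs, le_trans ?_ hVl, hVM⟩
  have h2k : (1 : ℝ) ≤ 2 ^ k := one_le_pow₀ (by norm_num)
  have hq1 : α / 2 ^ (k + 1) ≤ 1 :=
    (div_le_self hα0.le (one_le_pow₀ (by norm_num))).trans hα1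
  rw [← hS]
  gcongr
  calc α / 2 * (α / 2 ^ (k + 1)) ^ (k * S)
      ≤ 1 * (α / 2 ^ (k + 1)) ^ (k * S) := by gcongr; linarith
    _ ≤ (α / 2 ^ (k + 1)) ^ S := by
      rw [one_mul]
      exact pow_le_pow_of_le_one (by positivity) hq1 (Nat.le_mul_of_pos_left _ (by omega))
    _ ≤ (α / 2 ^ k) ^ S := by
      gcongr
      · norm_num
      · omega
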